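/- The comparison graph G is connected if and only if there exists a unique vector q with L *ᵥ q = s and ∑ i, q i = 0 (Proposition 3.1: the least squares rating is unique if and only if the comparison multigraph is connected). -/

import Mathlib

/-!
The Laplacian acts by `(L q) i = ∑ j, M i j * (q i - q j)`. Hence the entries of `L q` add up to
zero, and `∑ i j, M i j * (q i - q j) ^ 2 = 2 * ∑ i, q i * (L q) i`, so `L q = 0` holds exactly when
`q` is constant along every edge.

If `G` is connected, the linear map `q ↦ L q + (∑ i, q i) • 1` is injective: the sum of the entries
of its value is `n * ∑ i, q i`, so a kernel vector has zero sum and `L q = 0`, and is a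
constant with zero sum. In finite dimension the map is therefore surjective. As the entries of `s`
add up to zero by skew-symmetry, a preimage of `s` has zero sum, hence solves `L q = s`; uniqueness
is injectivity. If `G` is disconnected, the centred indicator of a component is a nonzero
vector with zero sum that `L` kills, and adding it to a solution yields another.
-/

open Matrix Finset

theorem laplacian_mulVec_apply {n : ℕ} {M L : Matrix (Fin n) (Fin n) ℝ} {d : Fin n → ℝ}
    (hMdiag : ∀ i, M i i = 0) (hd : ∀ i, d i = ∑ j, M i j)
    (hL : ∀ i j, L i j = if i = j then d i else -M i j) (q : Fin n → ℝ) (i : Fin n) :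
    (L *ᵥ q) i = ∑ j, M i j * (q i - q j) := by
  have h : ∀ j, L i j * q j = (if i = j then d i * q i else 0) - M i j * q j := by
    intro j
    rw [hL]
    split_ifs with hij
    · subst hij
      simp [hMdiag]
    · ring
  simp only [mulVec, dotProduct, h, Finset.sum_sub_distrib, mul_sub]
  rw [Finset.sum_ite_eq, if_pos (Finset.mem_univ i), hd, Finset.sum_mul]

/-- A double sum of skew-symmetric terms vanishes. -/
theorem sum_skew_eq_zero {n : ℕ} {f : Fin n → Fin n → ℝ} (hf : ∀ i j, f j i = -f i j) :
    ∑ i, ∑ j, f i j = 0 := by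
  have h : ∑ i, ∑ j, f i j = -∑ i, ∑ j, f i j := by
    conv_lhs => rw [Finset.sum_comm]
    simp only [← Finset.sum_neg_distrib]
    exact Finset.sum_congr rfl fun i _ => Finset.sum_congr rfl fun j _ => hf i j
  linarith

/-- A kernel vector of the Laplacian has zero Dirichlet energy, hence is constant along edges. -/
theorem eq_of_laplacian_eq_zero {n : ℕ} {M : Matrix (Fin n) (Fin n) ℝ}
    (hMsymm : ∀ i j, M j i = M i j) (hMnonneg : ∀ i j, 0 ≤ M i j) {q : Fin n → ℝ}
    (hq : ∀ i, ∑ j, M i j * (q i - q j) = 0) {i j : Fin n} (hij : 0 < M i j) : q i = q j := by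
  have hnn : ∀ i j, 0 ≤ M i j * (q i - q j) ^ 2 := fun i j =>
    mul_nonneg (hMnonneg i j) (sq_nonneg _)
  have henergy : ∑ i, ∑ j, M i j * (q i - q j) ^ 2 = 0 := by
    -- `(a - b) ^ 2 = 2 * a * (a - b) - (a + b) * (a - b)`, and the last part is skew.
    have hskew : ∑ i, ∑ j, M i j * ((q i + q j) * (q i - q j)) = 0 :=
      sum_skew_eq_zero fun i j => by rw [hMsymm]; ring
    have hdiag : ∑ i, ∑ j, 2 * q i * (M i j * (q i - q j)) = 0 := by
      simp only [← Finset.mul_sum, hq, mul_zero, Finset.sum_const_zero]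
    calc ∑ i, ∑ j, M i j * (q i - q j) ^ 2
        = ∑ i, ∑ j, (2 * q i * (M i j * (q i - q j))
            - M i j * ((q i + q j) * (q i - q j))) :=
          Finset.sum_congr rfl fun i _ => Finset.sum_congr rfl fun j _ => by ring
      _ = 0 := by simp only [Finset.sum_sub_distrib, hskew, hdiag, sub_zero]
  have hi := (Finset.sum_eq_zero_iff_of_nonneg
    (fun i _ => Finset.sum_nonneg fun j _ => hnn i j)).1 henergy i (Finset.mem_univ i)
  have hj := (Finset.sum_eq_zero_iff_of_nonneg (fun j _ => hnn i j)).1 hi j (Finset.mem_univ j)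
  have h0 := (mul_eq_zero.1 hj).resolve_left hij.ne'
  exact sub_eq_zero.1 (pow_eq_zero_iff (two_ne_zero)|>.1 h0)

/-- Proposition 3.1: the least squares rating is unique if and only if the
comparison graph is connected. -/
theorem least_squares_unique_iff_connected (n : ℕ) (hn : 2 ≤ n)
    (M A : Matrix (Fin n) (Fin n) ℝ)
    (hMsymm : ∀ i j, M j i = M i j)
    (hMnonneg : ∀ i j, 0 ≤ M i j)
    (hMdiag : ∀ i, M i i = 0)
    (hAskew : ∀ i j, A j i = -A i j)
    (hAM : ∀ i j, M i j = 0 → A i j = 0)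
    (e : Fin n → ℝ) (he : ∀ i, e i = 1)
    (s : Fin n → ℝ) (hs : s = A *ᵥ e)
    (d : Fin n → ℝ) (hd : ∀ i, d i = ∑ j, M i j)
    (L : Matrix (Fin n) (Fin n) ℝ)
    (hL : ∀ i j, L i j = if i = j then d i else -M i j)
    (G : SimpleGraph (Fin n))
    (hG : ∀ i j, G.Adj i j ↔ i ≠ j ∧ 0 < M i j) :
    G.Connected ↔ ∃! q : Fin n → ℝ, L *ᵥ q = s ∧ (∑ i, q i) = 0 := by
  have hLapp := laplacian_mulVec_apply hMdiag hd hL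
  have hLsum : ∀ q : Fin n → ℝ, ∑ i, (L *ᵥ q) i = 0 := fun q => by
    simp only [hLapp]
    exact sum_skew_eq_zero fun i j => by rw [hMsymm]; ring
  have hssum : ∑ i, s i = 0 := by
    subst hs
    simp only [mulVec, dotProduct, he, mul_one]
    exact sum_skew_eq_zero hAskew
  have hn0 : (n : ℝ) ≠ 0 := by
    have : n ≠ 0 := by omega
    exact_mod_cast this
  constructor
  · intro hconn
    have hker : ∀ q : Fin n → ℝ, L *ᵥ q = 0 → ∑ i, q i = 0 → q = 0 := by
      intro q hq hsum
      have hedge : ∀ i j, G.Adj i j → q i = q j := fun i j hij =>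
        eq_of_laplacian_eq_zero hMsymm hMnonneg (fun i => by rw [← hLapp, hq]; rfl)
          ((hG i j).1 hij).2
      have hconst : ∀ i j, q i = q j := by
        intro i j
        obtain ⟨w⟩ := hconn.preconnected i j
        induction w with
        | nil => rfl
        | cons h _ ih => exact (hedge _ _ h).trans ih
      funext i
      have h : ∑ j, q j = n * q i := by
        rw [Finset.sum_congr rfl fun j _ => hconst j i]
        simp
      rw [hsum] at h
      exact (mul_eq_zero.1 h.symm).resolve_left hn0
    let T : (Fin n → ℝ) →ₗ[ℝ] (Fin n → ℝ) :=
      { toFun := fun q => L *ᵥ q + fun _ => ∑ i, q i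
        map_add' := fun x y => by
          funext i
          simp only [mulVec_add, Pi.add_apply, Finset.sum_add_distrib]
          ring
        map_smul' := fun c x => by
          funext i
          simp only [mulVec_smul, Pi.add_apply, Pi.smul_apply, smul_eq_mul, RingHom.id_apply,
            ← Finset.mul_sum]
          ring }
    have hT : ∀ q i, T q i = (L *ᵥ q) i + ∑ i, q i := fun _ _ => rfl
    -- The entries of `T q` add up to `n * ∑ i, q i`.
    have hTsum : ∀ q, ∑ i, T q i = 0 → ∑ i, q i = 0 := by
      intro q h
      simp only [hT, Finset.sum_add_distrib, hLsum, zero_add, Finset.sum_const, Finset.card_univ,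
        Fintype.card_fin, nsmul_eq_mul] at h
      exact (mul_eq_zero.1 h).resolve_left hn0
    have hTinj : Function.Injective T := by
      rw [injective_iff_map_eq_zero]
      intro q hq
      have h0 : ∑ i, q i = 0 := hTsum q (by simp [hq])
      refine hker q ?_ h0
      funext i
      have h := hT q i
      rw [h0, hq, add_zero] at h
      exact h.symm
    obtain ⟨q, hq⟩ := LinearMap.injective_iff_surjective.1 hTinj s
    have hq0 : ∑ i, q i = 0 := hTsum q (by rw [hq, hssum])
    refine ⟨q, ⟨?_, hq0⟩, ?_⟩
    · funext i
      have h := hT q i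
      rw [hq0, hq, add_zero] at h
      exact h.symm
    · rintro p ⟨hp, hp0⟩
      apply hTinj
      funext i
      rw [hq, hT, hp, hp0, add_zero]
  · rintro ⟨q, ⟨hq, hq0⟩, huniq⟩
    classical
    have : Nonempty (Fin n) := ⟨⟨0, by omega⟩⟩
    refine ⟨fun u v => ?_⟩
    by_contra huv
    let x : Fin n → ℝ := fun i => if G.Reachable u i then 1 else 0
    let y : Fin n → ℝ := fun i => x i - (∑ j, x j) / n
    have hy0 : ∑ i, y i = 0 := by
      simp only [y, Finset.sum_sub_distrib, Finset.sum_const, Finset.card_univ,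
        Fintype.card_fin, nsmul_eq_mul]
      field_simp
      ring
    have hedge : ∀ i j, M i j * (y i - y j) = 0 := by
      intro i j
      rcases (hMnonneg i j).eq_or_lt with h | h
      · rw [← h, zero_mul]
      · have hadj : G.Adj i j := (hG i j).2
          ⟨fun hij => by rw [hij, hMdiag] at h; exact lt_irrefl _ h, h⟩
        have hr : G.Reachable u i ↔ G.Reachable u j :=
          ⟨fun hu => hu.trans hadj.reachable, fun hu => hu.trans hadj.symm.reachable⟩
        simp [y, x, hr]
    have hLy : L *ᵥ y = 0 := by
      funext i
      rw [hLapp]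
      exact Finset.sum_eq_zero fun j _ => hedge i j
    have hqy : q + y = q := huniq (q + y)
      ⟨by rw [mulVec_add, hLy, add_zero, hq],
        by simp only [Pi.add_apply, Finset.sum_add_distrib, hq0, hy0, add_zero]⟩
    have hy : y = 0 := by simpa using hqy
    have hxu : x u = 1 := if_pos (SimpleGraph.Reachable.refl u)
    have hxv : x v = 0 := if_neg huv
    have hyu : x u - (∑ j, x j) / n = 0 := congrFun hy u
    have hyv : x v - (∑ j, x j) / n = 0 := congrFun hy v
    linarith
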